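/- Let K be a separably closed field and let A be a nonzero finitely generated commutative K-algebra that is geometrically reduced, i.e. A ⊗_K K̄ is reduced for an algebraic closure K̄ of K. Then A admits a K-rational point: there exists a K-algebra homomorphism A → K. -/

import Mathlib

open TensorProduct

/-!
At a minimal prime, the local ring of `A` is a field `L` that is geometrically reduced over `K`.
In characteristic `p`, Frobenius preserves linear independence over the perfect field `K̄` in the
reduced ring `K̄ ⊗ L`, so `p`-th powers of `K`-linearly independent elements of `L` stay
`K`-linearly independent. By MacLane's criterion `L` is then separably generated over `K`, hence
formally smooth, so `Spec A` is smooth at its generic points. A neighbourhood of a smooth point is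
étale over an affine space `𝔸ⁿ`; its image there is open and, as `K` is infinite, contains a
`K`-point. The fibre over that point is the spectrum of a nonzero étale algebra over a separably
closed field, which is a product of copies of `K`.
-/

theorem isReduced_tensorProduct_of_isLocalization {R : Type*} (S : Type*) {A : Type*} (B : Type*)
    [CommRing R] [CommRing S] [CommRing A] [CommRing B] [Algebra R S] [Algebra R A] [Algebra R B]
    [Algebra A B] [IsScalarTower R A B] (M : Submonoid A) [IsLocalization M B]
    [IsReduced (S ⊗[R] A)] : IsReduced (S ⊗[R] B) :=
  let N := M.map (Algebra.TensorProduct.includeRight (R := R) (A := S))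
  have : IsReduced (Localization N) := isReduced_localizationPreserves N _ ‹_›
  isReduced_of_injective _
    (IsLocalization.tensorProductEquivOfMapIncludeRight R S M B (Localization N)).injective

theorem isGeometricallyReduced_of_isLocalization (R : Type*) {A : Type*} (B : Type*)
    [CommRing R] [CommRing A] [CommRing B] [Algebra R A] [Algebra R B] [Algebra A B]
    [IsScalarTower R A B] (M : Submonoid A) [IsLocalization M B]
    [Algebra.IsGeometricallyReduced R A] : Algebra.IsGeometricallyReduced R B :=
  ⟨fun _ _ ↦ isReduced_tensorProduct_of_isLocalization _ B M⟩

theorem linearIndependent_pow_of_perfectRing {ι k A : Type*} [Field k] [CommRing A] [IsReduced A]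
    [Algebra k A] (p : ℕ) [ExpChar k p] [PerfectRing k p] {v : ι → A}
    (hv : LinearIndependent k v) : LinearIndependent k (fun i ↦ v i ^ p) := by
  cases subsingleton_or_nontrivial A
  · have : IsEmpty ι := ⟨fun i ↦ hv.ne_zero i (Subsingleton.elim _ _)⟩
    exact linearIndependent_empty_type
  have : ExpChar A p := expChar_of_injective_algebraMap (algebraMap k A).injective p
  refine hv.map_of_injective_injective (frobeniusEquiv k p).symm (frobenius A p).toAddMonoidHom
    (by simp) (fun a ha ↦ ?_) fun r a ↦ ?_
  · exact frobenius_inj A p (by simpa using ha)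
  · simp [frobenius_def, Algebra.smul_def, mul_pow, ← map_pow, frobeniusEquiv_symm_pow]

theorem linearIndependent_pow_of_isGeometricallyReduced {ι k A : Type*} [Field k] [CommRing A]
    [Algebra k A] [Algebra.IsGeometricallyReduced k A] (p : ℕ) [ExpChar k p] {v : ι → A}
    (hv : LinearIndependent k v) : LinearIndependent k (fun i ↦ v i ^ p) := by
  have : IsReduced (AlgebraicClosure k ⊗[k] A) :=
    (Algebra.isGeometricallyReduced_field_iff k A).mp ‹_›
  have : ExpChar (AlgebraicClosure k) p :=
    expChar_of_injective_algebraMap (algebraMap k _).injective p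
  have hv' : LinearIndependent (AlgebraicClosure k)
      (fun i ↦ ((1 : AlgebraicClosure k) ⊗ₜ[k] v i) ^ p) :=
    linearIndependent_pow_of_perfectRing p (Module.Flat.linearIndependent_one_tmul hv)
  simp only [Algebra.TensorProduct.tmul_pow, one_pow] at hv'
  exact (hv'.restrict_scalars' k).of_comp
    (Algebra.TensorProduct.includeRight : A →ₐ[k] AlgebraicClosure k ⊗[k] A).toLinearMap

section SeparablyGenerated

variable (k L : Type*) [Field k] [Field L] [Algebra k L] [Algebra.EssFiniteType k L]
  [Algebra.IsGeometricallyReduced k L]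

theorem exists_isTranscendenceBasis_and_isSeparable_of_isGeometricallyReduced :
    ∃ s : Finset L, IsTranscendenceBasis k ((↑) : s → L) ∧
      Algebra.IsSeparable (IntermediateField.adjoin k (s : Set L)) L := by
  obtain _ | ⟨p, hp, _⟩ := CharP.exists' k
  · exact exists_isTranscendenceBasis_and_isSeparable_of_perfectField k L
  · have : ExpChar k p := .prime hp.out
    exact exists_isTranscendenceBasis_and_isSeparable_of_linearIndepOn_pow_of_essFiniteType
      p hp.out fun _ ↦ linearIndependent_pow_of_isGeometricallyReduced p

theorem formallySmooth_of_isGeometricallyReduced : Algebra.FormallySmooth k L := by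
  obtain ⟨s, hs, hsep⟩ :=
    exists_isTranscendenceBasis_and_isSeparable_of_isGeometricallyReduced k L
  have : Algebra.IsSeparable (IntermediateField.adjoin k (Set.range ((↑) : s → L))) L := by
    convert! hsep <;> exact Subtype.range_coe
  exact .of_algebraicIndependent_of_isSeparable hs.1

end SeparablyGenerated

theorem isSmoothAt_of_mem_minimalPrimes (k : Type*) {A : Type*} [Field k] [CommRing A]
    [Algebra k A] [Algebra.EssFiniteType k A] [Algebra.IsGeometricallyReduced k A] {p : Ideal A}
    [p.IsPrime] (hp : p ∈ minimalPrimes A) : Algebra.IsSmoothAt k p := by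
  have : IsReduced A := Algebra.isReduced_of_isGeometricallyReduced k
  have : Ring.KrullDimLE 0 (Localization.AtPrime p) := .of_isLocalization p hp _
  let : Field (Localization.AtPrime p) := Ring.KrullDimLE.isField_of_isReduced.toField
  have : Algebra.EssFiniteType k (Localization.AtPrime p) := .comp k A _
  have : Algebra.IsGeometricallyReduced k (Localization.AtPrime p) :=
    isGeometricallyReduced_of_isLocalization k _ p.primeCompl
  exact formallySmooth_of_isGeometricallyReduced k (Localization.AtPrime p)

theorem nontrivial_tensorProduct_of_comap_eq {R S T : Type*} [CommRing R] [CommRing S] [CommRing T]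
    [Algebra R S] [Algebra R T] {x : PrimeSpectrum S} {y : PrimeSpectrum T}
    (h : x.comap (algebraMap R S) = y.comap (algebraMap R T)) : Nontrivial (S ⊗[R] T) := by
  let p := (x.comap (algebraMap R S)).asIdeal
  have : x.asIdeal.LiesOver p := ⟨rfl⟩
  have : y.asIdeal.LiesOver p := ⟨congrArg PrimeSpectrum.asIdeal h⟩
  have : Nontrivial ((S ⧸ x.asIdeal) ⊗[R ⧸ p] (T ⧸ y.asIdeal)) :=
    Algebra.TensorProduct.nontrivial_of_algebraMap_injective_of_isDomain _ _ _
      (FaithfulSMul.algebraMap_injective _ _) (FaithfulSMul.algebraMap_injective _ _)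
  exact ((Algebra.TensorProduct.mapOfCompatibleSMul (R ⧸ p) R R _ _).comp
    (Algebra.TensorProduct.map (Ideal.Quotient.mkₐ R x.asIdeal)
      (Ideal.Quotient.mkₐ R y.asIdeal))).toRingHom.domain_nontrivial

theorem nonempty_algHom_of_formallyEtale_of_isSepClosed (k A : Type*) [Field k] [IsSepClosed k]
    [CommRing A] [Nontrivial A] [Algebra k A] [Algebra.EssFiniteType k A]
    [Algebra.FormallyEtale k A] : Nonempty (A →ₐ[k] k) :=
  (Algebra.IsFiniteSplit.algHomEquivPrimeSpectrum k A).nonempty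

theorem nonempty_algHom_of_formallyEtale_of_mem_range_comap {R A Ω : Type*} [CommRing R]
    [CommRing A] [Field Ω] [IsSepClosed Ω] [Algebra R A] [Algebra.EssFiniteType R A]
    [Algebra.FormallyEtale R A] [Algebra R Ω] {x : PrimeSpectrum Ω}
    (hx : x.comap (algebraMap R Ω) ∈ Set.range (PrimeSpectrum.comap (algebraMap R A))) :
    Nonempty (A →ₐ[R] Ω) := by
  obtain ⟨y, hy⟩ := hx
  have : Nontrivial (Ω ⊗[R] A) := nontrivial_tensorProduct_of_comap_eq hy.symm
  obtain ⟨φ⟩ := nonempty_algHom_of_formallyEtale_of_isSepClosed Ω (Ω ⊗[R] A)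
  exact ⟨(φ.restrictScalars R).comp Algebra.TensorProduct.includeRight⟩

theorem infinite_of_isSepClosed (k : Type*) [Field k] [IsSepClosed k] : Infinite k := by
  cases finite_or_infinite k
  · have : IsAlgClosed k := inferInstance
    infer_instance
  · assumption

theorem denseRange_pointToPoint (σ k : Type*) [Field k] [Infinite k] :
    DenseRange (MvPolynomial.pointToPoint : (σ → k) → PrimeSpectrum (MvPolynomial σ k)) := by
  rw [DenseRange, PrimeSpectrum.isTopologicalBasis_basic_opens.dense_iff]
  rintro _ ⟨f, rfl⟩ ⟨q, hq⟩
  have hf : f ≠ 0 := by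
    rintro rfl
    exact hq q.asIdeal.zero_mem
  obtain ⟨x, hx⟩ : ∃ x, MvPolynomial.eval x f ≠ 0 := by
    simpa using mt MvPolynomial.funext_iff.mpr hf
  refine ⟨_, fun hmem ↦ hx ?_, x, rfl⟩
  simpa using (MvPolynomial.mem_vanishingIdeal_singleton_iff x f).mp hmem

theorem nonempty_algHom_of_etale_mvPolynomial (σ k A : Type*) [Field k] [IsSepClosed k]
    [CommRing A] [Nontrivial A] [Algebra k A] [Algebra (MvPolynomial σ k) A]
    [IsScalarTower k (MvPolynomial σ k) A] [Algebra.Etale (MvPolynomial σ k) A] :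
    Nonempty (A →ₐ[k] k) := by
  have := infinite_of_isSepClosed k
  obtain ⟨x, hx⟩ := (denseRange_pointToPoint σ k).exists_mem_open
    PrimeSpectrum.isOpenMap_comap_of_hasGoingDown_of_finitePresentation.isOpen_range
    (Set.range_nonempty (PrimeSpectrum.comap (algebraMap (MvPolynomial σ k) A)))
  let : Algebra (MvPolynomial σ k) k := (MvPolynomial.aeval x).toAlgebra
  have : IsScalarTower k (MvPolynomial σ k) k :=
    .of_algebraMap_eq fun r ↦ ((MvPolynomial.aeval x).commutes r).symm
  have hpoint : (⊥ : PrimeSpectrum k).comap (algebraMap (MvPolynomial σ k) k) =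
      MvPolynomial.pointToPoint x := by
    ext f
    exact (MvPolynomial.mem_vanishingIdeal_singleton_iff x f).symm
  obtain ⟨φ⟩ := nonempty_algHom_of_formallyEtale_of_mem_range_comap (hpoint ▸ hx)
  exact ⟨φ.restrictScalars k⟩

theorem nontrivial_of_isLocalizationAway_of_notMem {A : Type*} (B : Type*) [CommRing A]
    [CommRing B] [Algebra A B] {p : Ideal A} [p.IsPrime] {f : A} [IsLocalization.Away f B]
    (hf : f ∉ p) : Nontrivial B :=
  have hunit : IsUnit (algebraMap A (Localization.AtPrime p) f) :=
    IsLocalization.map_units _ (⟨f, hf⟩ : p.primeCompl)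
  (IsLocalization.Away.lift f hunit : B →+* Localization.AtPrime p).domain_nontrivial

theorem nonempty_algHom_of_isSmoothAt {k A : Type*} [Field k] [IsSepClosed k] [CommRing A]
    [Algebra k A] [Algebra.FinitePresentation k A] (p : Ideal A) [p.IsPrime]
    [Algebra.IsSmoothAt k p] : Nonempty (A →ₐ[k] k) := by
  obtain ⟨f, hf, n, _, _, _⟩ :=
    Algebra.IsSmoothAt.exists_isStandardEtale_mvPolynomial (R := k) (p := p)
  have := nontrivial_of_isLocalizationAway_of_notMem (Localization.Away f) hf
  obtain ⟨φ⟩ := nonempty_algHom_of_etale_mvPolynomial (Fin n) k (Localization.Away f)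
  exact ⟨φ.comp (IsScalarTower.toAlgHom k A _)⟩

/-- Let `K` be a separably closed field and `A` a nonzero finitely generated
commutative `K`-algebra which is geometrically reduced (i.e. `A ⊗[K] K̄` is reduced).  Then `A`
admits a `K`-rational point, i.e. a `K`-algebra homomorphism `A → K`. -/
theorem exists_rational_point_of_geometrically_reduced
    (K : Type*) [Field K] [IsSepClosed K]
    (A : Type*) [CommRing A] [Algebra K A] [Nontrivial A]
    (hfg : Algebra.FiniteType K A)
    (hred : IsReduced (A ⊗[K] AlgebraicClosure K)) :
    Nonempty (A →ₐ[K] K) := by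
  have : Algebra.IsGeometricallyReduced K A := (Algebra.isGeometricallyReduced_field_iff K A).mpr <|
    isReduced_of_injective _ (Algebra.TensorProduct.comm K (AlgebraicClosure K) A).injective
  have : Algebra.FinitePresentation K A := Algebra.FinitePresentation.of_finiteType.mp hfg
  obtain ⟨p, hp⟩ : Nonempty (minimalPrimes A) := Ideal.nonempty_minimalPrimes bot_ne_top
  have : p.IsPrime := hp.1.1
  have : Algebra.IsSmoothAt K p := isSmoothAt_of_mem_minimalPrimes K hp
  exact nonempty_algHom_of_isSmoothAt p
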